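/- arXiv:2012.05755 — 2 statements merged into one kernel-verified Lean document; each statement's English description precedes it below -/
import Mathlib

section
/- Let φ,h:(0,∞)→ℝ be convex and differentiable, let α(R)>0 and λ̂>0, and let Φ(R,v1,v2,v3)=α(R)(φ(v1)+φ(v2)+φ(v3))+h(v1v2v3). Let R∈(0,1] and suppose r is differentiable at R with r(R)>0 and r'(R)>0. Then [Φ(R, r'(R), r(R)/R, r(R)/R) − Φ(R, λ̂, λ̂, λ̂)] R² ≥ α(R) φ'(λ̂)(R² r'(R) + 2R r(R) − 3λ̂ R²) + h'(λ̂³)(r(R)² r'(R) − λ̂³ R²), and the right-hand side equals α(R) φ'(λ̂) · d/dR[r(R)R² − λ̂R³] + (1/3) h'(λ̂³) · d/dR[r(R)³ − λ̂³R³]. -/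
open MeasureTheory Real Set Filter

/-!
Convexity of `φ` and `h` puts `Φ` above its first-order expansion at the homogeneous stretch
`λ̂ (1, …, 1)`, where the variables of the expansion are the sum and the product of the stretches.
For the radial map `x ↦ r(|x|) x / |x|` in dimension `n + 1` the stretches are `r'` once and
`r / R` with multiplicity `n`; multiplied by the area factor `R ^ n`, their sum and their product
become the derivatives of `r R ^ n` and of `r ^ (n + 1) / (n + 1)`, which makes the lower bound a
combination of null Lagrangians.
-/

section Convexity

variable {s : Set ℝ} {f : ℝ → ℝ} {f' x y : ℝ}

theorem mul_sub_le_sub_of_convexOn_of_hasDerivAt (hf : ConvexOn ℝ s f) (hx : x ∈ s) (hy : y ∈ s)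
    (hf' : HasDerivAt f f' x) : f' * (y - x) ≤ f y - f x := by
  rcases lt_trichotomy x y with hxy | rfl | hyx
  · have hslope := hf.le_slope_of_hasDerivAt hx hy hxy hf'
    rwa [slope_def_field, le_div_iff₀ (sub_pos.2 hxy)] at hslope
  · simp
  · have hslope := hf.slope_le_of_hasDerivAt hy hx hyx hf'
    rw [slope_def_field, div_le_iff₀ (sub_pos.2 hyx)] at hslope
    linarith

end Convexity

section StoredEnergy

variable {ι : Type*} [Fintype ι]

/-- The stored energy `a ∑ φ(vᵢ) + h(∏ vᵢ)` of a deformation with principal stretches `v`.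
The radially varying coefficient of `Φ` enters through its value `a = α(R)`. -/
def storedEnergy (a : ℝ) (φ h : ℝ → ℝ) (v : ι → ℝ) : ℝ :=
  a * ∑ i, φ (v i) + h (∏ i, v i)

theorem storedEnergy_fin_three (a : ℝ) (φ h : ℝ → ℝ) (v : Fin 3 → ℝ) :
    storedEnergy a φ h v = a * (φ (v 0) + φ (v 1) + φ (v 2)) + h (v 0 * v 1 * v 2) := by
  rw [storedEnergy, Fin.sum_univ_three, Fin.prod_univ_three]

theorem tangent_le_storedEnergy_sub {s t : Set ℝ} {φ h : ℝ → ℝ} {φ' v w : ι → ℝ} {a h' : ℝ}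
    (ha : 0 ≤ a) (hφ : ConvexOn ℝ s φ) (hh : ConvexOn ℝ t h)
    (hv : ∀ i, v i ∈ s) (hw : ∀ i, w i ∈ s) (hvt : ∏ i, v i ∈ t) (hwt : ∏ i, w i ∈ t)
    (hφ' : ∀ i, HasDerivAt φ (φ' i) (w i)) (hh' : HasDerivAt h h' (∏ i, w i)) :
    a * ∑ i, φ' i * (v i - w i) + h' * (∏ i, v i - ∏ i, w i) ≤
      storedEnergy a φ h v - storedEnergy a φ h w := by
  have hsum : ∑ i, φ' i * (v i - w i) ≤ ∑ i, φ (v i) - ∑ i, φ (w i) := by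
    rw [← Finset.sum_sub_distrib]
    exact Finset.sum_le_sum fun i _ ↦
      mul_sub_le_sub_of_convexOn_of_hasDerivAt hφ (hw i) (hv i) (hφ' i)
  have hprod := mul_sub_le_sub_of_convexOn_of_hasDerivAt hh hwt hvt hh'
  unfold storedEnergy
  linarith [mul_le_mul_of_nonneg_left hsum ha]

end StoredEnergy

section RadialStretch

variable {n : ℕ} {ρ ρ' R : ℝ}

/-- The principal stretches at radius `R` of the radial map `x ↦ r(|x|) x / |x|` in dimension
`n + 1`, in terms of `ρ = r(R)` and `ρ' = r'(R)`: the radial stretch `ρ'`, followed by `n` copies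
of the tangential stretch `ρ / R`. -/
noncomputable def radialStretch (n : ℕ) (ρ ρ' R : ℝ) : Fin (n + 1) → ℝ :=
  Fin.cons ρ' fun _ ↦ ρ / R

theorem radialStretch_two (ρ ρ' R : ℝ) : radialStretch 2 ρ ρ' R = ![ρ', ρ / R, ρ / R] := by
  ext i
  fin_cases i <;> rfl

theorem radialStretch_pos (hρ : 0 < ρ) (hρ' : 0 < ρ') (hR : 0 < R) (i : Fin (n + 1)) :
    0 < radialStretch n ρ ρ' R i := by
  cases i using Fin.cases with
  | zero => exact hρ'
  | succ => exact div_pos hρ hR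

theorem sum_radialStretch_mul_pow (hR : R ≠ 0) :
    (∑ i, radialStretch n ρ ρ' R i) * R ^ n = R ^ n * ρ' + n * R ^ (n - 1) * ρ := by
  rcases n with _ | n
  · simp [radialStretch]
  · simp only [radialStretch, Fin.sum_cons, Finset.sum_const, Finset.card_univ, Fintype.card_fin,
      nsmul_eq_mul, Nat.add_sub_cancel]
    field_simp
    ring

theorem prod_radialStretch_mul_pow (hR : R ≠ 0) :
    (∏ i, radialStretch n ρ ρ' R i) * R ^ n = ρ ^ n * ρ' := by
  simp only [radialStretch, Fin.prod_cons, Finset.prod_const, Finset.card_univ, Fintype.card_fin]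
  rw [mul_assoc, ← mul_pow, div_mul_cancel₀ ρ hR, mul_comm]

end RadialStretch

section NullLagrangian

variable {𝕜 : Type*} [NontriviallyNormedField 𝕜] {r : 𝕜 → 𝕜} {r' x : 𝕜}

theorem hasDerivAt_mul_pow_sub_const_mul_pow (n : ℕ) (c : 𝕜) (hr : HasDerivAt r r' x) :
    HasDerivAt (fun y ↦ r y * y ^ n - c * y ^ (n + 1))
      (x ^ n * r' + n * x ^ (n - 1) * r x - (n + 1) * c * x ^ n) x := by
  refine ((hr.mul (hasDerivAt_pow n x)).sub
    ((hasDerivAt_pow (n + 1) x).const_mul c)).congr_deriv ?_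
  push_cast [Nat.add_sub_cancel]
  ring

theorem hasDerivAt_pow_sub_const_mul_pow_div [CharZero 𝕜] (n : ℕ) (c : 𝕜)
    (hr : HasDerivAt r r' x) :
    HasDerivAt (fun y ↦ (r y ^ (n + 1) - c * y ^ (n + 1)) / (n + 1))
      (r x ^ n * r' - c * x ^ n) x := by
  refine (((hr.pow (n + 1)).sub ((hasDerivAt_pow (n + 1) x).const_mul c)).div_const
    _).congr_deriv ?_
  have hn : (n + 1 : 𝕜) ≠ 0 := n.cast_add_one_ne_zero
  push_cast [Nat.add_sub_cancel]
  field_simp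

end NullLagrangian

theorem tangent_le_storedEnergy_radialStretch_sub {n : ℕ} {φ h : ℝ → ℝ}
    {a φ' h' lamh ρ ρ' R : ℝ} (ha : 0 ≤ a)
    (hφ : ConvexOn ℝ (Ioi 0) φ) (hh : ConvexOn ℝ (Ioi 0) h)
    (hφ' : HasDerivAt φ φ' lamh) (hh' : HasDerivAt h h' (lamh ^ (n + 1)))
    (hlamh : 0 < lamh) (hR : 0 < R) (hρ : 0 < ρ) (hρ' : 0 < ρ') :
    a * φ' * (R ^ n * ρ' + n * R ^ (n - 1) * ρ - (n + 1) * lamh * R ^ n) +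
        h' * (ρ ^ n * ρ' - lamh ^ (n + 1) * R ^ n) ≤
      (storedEnergy a φ h (radialStretch n ρ ρ' R) -
        storedEnergy a φ h fun _ : Fin (n + 1) ↦ lamh) * R ^ n := by
  set v := radialStretch n ρ ρ' R
  have hv : ∀ i, 0 < v i := radialStretch_pos hρ hρ' hR
  have htangent :
      a * (φ' * (∑ i, v i - (n + 1) * lamh)) + h' * (∏ i, v i - lamh ^ (n + 1)) ≤
        storedEnergy a φ h v - storedEnergy a φ h fun _ : Fin (n + 1) ↦ lamh := by
    simpa [← Finset.mul_sum] using tangent_le_storedEnergy_sub (w := fun _ ↦ lamh)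
      (φ' := fun _ ↦ φ') ha hφ hh hv (fun _ ↦ hlamh) (Finset.prod_pos fun i _ ↦ hv i)
      (Finset.prod_pos fun _ _ ↦ hlamh) (fun _ ↦ hφ') (by simpa using hh')
  calc
    _ = (a * (φ' * (∑ i, v i - (n + 1) * lamh)) + h' * (∏ i, v i - lamh ^ (n + 1))) * R ^ n := by
      rw [← sum_radialStretch_mul_pow hR.ne', ← prod_radialStretch_mul_pow hR.ne']
      ring
    _ ≤ _ := mul_le_mul_of_nonneg_right htangent (pow_nonneg hR.le n)

theorem stmt13_general (n : ℕ) {φ h r : ℝ → ℝ} {a φ' h' lamh r' R : ℝ} (ha : 0 ≤ a)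
    (hφ : ConvexOn ℝ (Ioi 0) φ) (hh : ConvexOn ℝ (Ioi 0) h)
    (hφ' : HasDerivAt φ φ' lamh) (hh' : HasDerivAt h h' (lamh ^ (n + 1)))
    (hlamh : 0 < lamh) (hR : 0 < R)
    (hr : HasDerivAt r r' R) (hrpos : 0 < r R) (hr'pos : 0 < r') :
    (a * φ' * (R ^ n * r' + n * R ^ (n - 1) * r R - (n + 1) * lamh * R ^ n) +
        h' * (r R ^ n * r' - lamh ^ (n + 1) * R ^ n) ≤
      (storedEnergy a φ h (radialStretch n (r R) r' R) -
        storedEnergy a φ h fun _ : Fin (n + 1) ↦ lamh) * R ^ n) ∧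
    HasDerivAt (fun S ↦ r S * S ^ n - lamh * S ^ (n + 1))
      (R ^ n * r' + n * R ^ (n - 1) * r R - (n + 1) * lamh * R ^ n) R ∧
    HasDerivAt (fun S ↦ (r S ^ (n + 1) - lamh ^ (n + 1) * S ^ (n + 1)) / (n + 1))
      (r R ^ n * r' - lamh ^ (n + 1) * R ^ n) R :=
  ⟨tangent_le_storedEnergy_radialStretch_sub ha hφ hh hφ' hh' hlamh hR hrpos hr'pos,
    hasDerivAt_mul_pow_sub_const_mul_pow n lamh hr,
    hasDerivAt_pow_sub_const_mul_pow_div n (lamh ^ (n + 1)) hr⟩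

theorem stmt13 (φ h φ' h' : ℝ → ℝ)
    (hφconv : ConvexOn ℝ (Ioi 0) φ) (hhconv : ConvexOn ℝ (Ioi 0) h)
    (hφd : ∀ t ∈ Ioi (0:ℝ), HasDerivAt φ (φ' t) t)
    (hhd : ∀ t ∈ Ioi (0:ℝ), HasDerivAt h (h' t) t)
    (α : ℝ → ℝ) (lamh : ℝ) (hlamh : 0 < lamh)
    (r r' : ℝ → ℝ) (R : ℝ) (hR : R ∈ Ioc (0:ℝ) 1) (hα : 0 < α R)
    (hrd : HasDerivAt r (r' R) R) (hrpos : 0 < r R) (hr'pos : 0 < r' R) :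
    -- the convexity inequality, with `Φ(R,v₁,v₂,v₃) = α(R)(φ(v₁)+φ(v₂)+φ(v₃)) + h(v₁v₂v₃)`
    (α R * φ' lamh * (R ^ 2 * r' R + 2 * R * r R - 3 * lamh * R ^ 2) +
        h' (lamh ^ 3) * ((r R) ^ 2 * r' R - lamh ^ 3 * R ^ 2) ≤
      ((α R * (φ (r' R) + φ (r R / R) + φ (r R / R)) + h (r' R * (r R / R) * (r R / R))) -
          (α R * (φ lamh + φ lamh + φ lamh) + h (lamh * lamh * lamh))) * R ^ 2) ∧
    -- the right-hand side is the indicated exact derivative combination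
    HasDerivAt (fun S => r S * S ^ 2 - lamh * S ^ 3)
      (R ^ 2 * r' R + 2 * R * r R - 3 * lamh * R ^ 2) R ∧
    HasDerivAt (fun S => ((r S) ^ 3 - lamh ^ 3 * S ^ 3) / 3)
      ((r R) ^ 2 * r' R - lamh ^ 3 * R ^ 2) R := by
  simpa [storedEnergy_fin_three, radialStretch_two, two_add_one_eq_three] using
    stmt13_general 2 hα.le hφconv hhconv (hφd _ hlamh) (hhd _ (pow_pos hlamh 3)) hlamh hR.1
      hrd hrpos hr'pos
end

section
/- Assume 0<k0≤ρ0(R)≤k1 on [0,1]. Let Φ:[0,1]×(0,∞)³→[0,∞) be continuous, continuously differentiable in R, symmetric in its last three arguments, and satisfy |∂Φ/∂R(R,v)| ≤ C Φ̃(v) for all R∈[0,1], v∈(0,∞)³, for some constant C>0 and some continuous Φ̃:(0,∞)³→[0,∞). Let λ>0 and let r ∈ A_λ satisfy: r(0)=0; r ∈ C¹((0,1]); r'(R) and r(R)/R extend to continuous strictly positive functions on [0,1] with common limit ℓ := lim_{R→0⁺} r'(R) ∈ (0,∞). Suppose there exist μ>0 and a locally absolutely continuous r_c:(0,∞)→(0,∞)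 with r_c'>0 a.e., lim_{S→0⁺} r_c(S) > 0, S ↦ r_c(S)/S continuous and strictly decreasing with r_c(S)/S → ∞ as S→0⁺, r_c(μ)/μ = ℓ, and r_c(μ')/μ' < ℓ for some μ'>μ; with finite energies ∫₀^b S² Φ̃(r_c'(S), r_c(S)/S, r_c(S)/S) dS < ∞ and ∫₀^b S² Φ(0, r_c'(S), r_c(S)/S, r_c(S)/S) dS < ∞ for every b>0; and with the strict energy inequality ∫₀¹ U² Φ(0, r_c'(μU), r_c(μU)/(μU), r_c(μU)/(μU)) dU < ∫₀¹ U² Φ(0, ℓ, ℓ, ℓ) dU (which holds when ℓ exceeds the critical boundary displacement of the material Φ(0,·)). Then r is not a minimizer of I over A_λ: there exists r̂ ∈ A_λ with I(r̂) < I(r). -/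
open MeasureTheory Real Set Filter

/-- `M_R = 4π ∫₀^R ρ0(u) u² du`. -/
noncomputable def Mfun (ρ0 : ℝ → ℝ) (R : ℝ) : ℝ := 4 * π * ∫ u in (0:ℝ)..R, ρ0 u * u ^ 2

/-- Mechanical energy. -/
noncomputable def Imec (Φ : ℝ → ℝ → ℝ → ℝ → ℝ) (r r' : ℝ → ℝ) : ℝ :=
  ∫ R in Ioo (0:ℝ) 1, Φ R (r' R) (r R / R) (r R / R) * R ^ 2

/-- Gravitational potential energy. -/
noncomputable def Ipot (ρ0 : ℝ → ℝ) (r : ℝ → ℝ) : ℝ :=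
  ∫ R in Ioo (0:ℝ) 1, ρ0 R * Mfun ρ0 R * (r R)⁻¹ * R ^ 2

/-- Total energy `I = I_mec − I_pot`. -/
noncomputable def Ifun (Φ : ℝ → ℝ → ℝ → ℝ → ℝ) (ρ0 : ℝ → ℝ) (r r' : ℝ → ℝ) : ℝ :=
  Imec Φ r r' - Ipot ρ0 r

/-- The admissible set `A_λ`. -/
def Adm (Φ : ℝ → ℝ → ℝ → ℝ → ℝ) (lam : ℝ) (r r' : ℝ → ℝ) : Prop :=
  IntervalIntegrable r' volume 0 1 ∧
  (∀ x ∈ Icc (0:ℝ) 1, r x = r 0 + ∫ t in (0:ℝ)..x, r' t) ∧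
  (∀ᵐ R ∂volume.restrict (Ioo (0:ℝ) 1), 0 < r' R) ∧
  r 1 = lam ∧ 0 ≤ r 0 ∧
  IntegrableOn (fun R => Φ R (r' R) (r R / R) (r R / R) * R ^ 2) (Ioo (0:ℝ) 1)

open scoped Topology

/-!
Near the origin `r` is almost the homogeneous deformation with stretch `ℓ`, so its mechanical
energy in the ball of radius `ε` is about `ε³ Φ(0, ℓ, ℓ, ℓ) / 3`. Replace `r` on `[0, ε)` by the
dilation `R ↦ r_c (κ R) / κ` of the cavitating map. Its hoop strain at `R` is that of `r_c` at
`s = κ R`, and `r_c(s) / s` is continuous and strictly decreasing with value `ℓ` at `μ`; hence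
for small `ε` the number `κ` can be chosen with `κ ε` close to `μ` so that the new map is
continuous at `ε`. By scaling, its energy in the ball is `ε³ / (κ ε)³` times the energy of `r_c` in
the ball of radius `κ ε`, up to the error `O(ε⁴)` caused by the dependence of `Φ` on `R`. By the
strict energy inequality this is a gain of order `ε³`. Both maps are bounded below by `m R`
with `m > 0`, and `M_R = O(R³)`, so the gravitational energy changes only by `O(ε⁵)`.
-/

/-- `f` is absolutely continuous on `[a, b]` with a.e. derivative `f'`, i.e. the pair `(f, f')` is
the continuous representative of an element of `W^{1,1}(a, b)` together with its weak derivative. -/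
def IsPrimitiveOn (f f' : ℝ → ℝ) (a b : ℝ) : Prop :=
  IntervalIntegrable f' volume a b ∧ ∀ x ∈ Icc a b, f x = f a + ∫ t in a..x, f' t

namespace IsPrimitiveOn

variable {f f' g g' : ℝ → ℝ} {a b c x y : ℝ}

lemma intervalIntegrable_of_mem (h : IsPrimitiveOn f f' a b) (hx : x ∈ Icc a b)
    (hy : y ∈ Icc a b) : IntervalIntegrable f' volume x y :=
  h.1.mono_set (uIcc_subset_uIcc (Icc_subset_uIcc hx) (Icc_subset_uIcc hy))

lemma sub_eq_integral (h : IsPrimitiveOn f f' a b) (hx : x ∈ Icc a b) (hy : y ∈ Icc a b) :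
    f y - f x = ∫ t in x..y, f' t := by
  have ha : a ∈ Icc a b := left_mem_Icc.2 (hx.1.trans hx.2)
  rw [h.2 x hx, h.2 y hy, ← intervalIntegral.integral_interval_sub_left
    (h.intervalIntegrable_of_mem ha hy) (h.intervalIntegrable_of_mem ha hx)]
  ring

lemma continuousOn (h : IsPrimitiveOn f f' a b) : ContinuousOn f (Icc a b) :=
  ContinuousOn.congr (continuousOn_const.add
    ((intervalIntegral.continuousOn_primitive_interval' h.1 left_mem_uIcc).mono Icc_subset_uIcc))
    h.2

lemma monotoneOn (h : IsPrimitiveOn f f' a b) (hf' : ∀ᵐ t ∂volume.restrict (Ioo a b), 0 ≤ f' t) :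
    MonotoneOn f (Icc a b) := by
  intro x hx y hy hxy
  rw [← sub_nonneg, h.sub_eq_integral hx hy]
  refine intervalIntegral.integral_nonneg_of_ae_restrict hxy ?_
  rw [Measure.restrict_congr_set Ioo_ae_eq_Icc.symm]
  exact ae_restrict_of_ae_restrict_of_subset (Ioo_subset_Ioo hx.1 hy.2) hf'

lemma trans (hf : IsPrimitiveOn f f' a b) (hg : IsPrimitiveOn f f' b c) (hab : a ≤ b)
    (hbc : b ≤ c) : IsPrimitiveOn f f' a c := by
  refine ⟨hf.1.trans hg.1, fun x hx => ?_⟩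
  rcases le_total x b with hxb | hbx
  · exact hf.2 x ⟨hx.1, hxb⟩
  · have hbx' := hg.intervalIntegrable_of_mem ⟨le_rfl, hbc⟩ ⟨hbx, hx.2⟩
    rw [hg.2 x ⟨hbx, hx.2⟩, hf.2 b ⟨hab, le_rfl⟩, add_assoc,
      intervalIntegral.integral_add_adjacent_intervals hf.1 hbx']

lemma congr (h : IsPrimitiveOn f f' a b) (hab : a ≤ b) (hg : EqOn f g (Icc a b))
    (hg' : EqOn f' g' (Ioo a b)) : IsPrimitiveOn g g' a b := by
  refine ⟨h.1.congr_uIoo (by rwa [uIoo_of_le hab]), fun x hx => ?_⟩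
  rw [← hg hx, ← hg (left_mem_Icc.2 hab), h.2 x hx, intervalIntegral.integral_congr_uIoo]
  rw [uIoo_of_le hx.1]
  exact hg'.mono (Ioo_subset_Ioo_right hx.2)

lemma mono (h : IsPrimitiveOn f f' a b) (hx : x ∈ Icc a b) (hy : y ∈ Icc a b) :
    IsPrimitiveOn f f' x y := by
  refine ⟨h.intervalIntegrable_of_mem hx hy, fun z hz => ?_⟩
  rw [← h.sub_eq_integral hx ⟨hx.1.trans hz.1, hz.2.trans hy.2⟩, add_sub_cancel]

lemma piecewise_Iio (hf : IsPrimitiveOn f f' a b) (hg : IsPrimitiveOn g g' b c) (hab : a ≤ b)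
    (hbc : b ≤ c) (hfg : f b = g b) :
    IsPrimitiveOn ((Iio b).piecewise f g) ((Iio b).piecewise f' g') a c := by
  refine (hf.congr hab (fun x hx => ?_) fun x hx => ?_).trans
    (hg.congr hbc (fun x hx => ?_) fun x hx => ?_) hab hbc
  · rcases hx.2.lt_or_eq with hxb | rfl
    · exact (piecewise_eq_of_mem (Iio b) f g hxb).symm
    · rw [piecewise_eq_of_notMem _ _ _ (notMem_Iio.2 le_rfl), hfg]
  · exact (piecewise_eq_of_mem (Iio b) f' g' hx.2).symm
  · exact (piecewise_eq_of_notMem (Iio b) f g (notMem_Iio.2 hx.1)).symm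
  · exact (piecewise_eq_of_notMem (Iio b) f' g' (notMem_Iio.2 hx.1.le)).symm

lemma comp_mul_left {κ : ℝ} (hκ : 0 < κ) (h : IsPrimitiveOn f f' (κ * a) (κ * b)) :
    IsPrimitiveOn (fun R => f (κ * R) / κ) (fun R => f' (κ * R)) a b := by
  refine ⟨?_, fun x hx => ?_⟩
  · simpa [hκ.ne'] using h.1.comp_mul_left (c := κ)
  · beta_reduce
    rw [h.2 (κ * x) ⟨by gcongr; exact hx.1, by gcongr; exact hx.2⟩,
      intervalIntegral.integral_comp_mul_left f' hκ.ne', smul_eq_mul]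
    ring

lemma intervalIntegrable_of_tendsto_nhdsGT (hab : a < b)
    (h : ∀ x ∈ Ioo a b, IsPrimitiveOn f f' x b)
    (hf' : ∀ᵐ t ∂volume.restrict (Ioo a b), 0 ≤ f' t) (hc : Tendsto f (𝓝[>] a) (𝓝 c)) :
    IntervalIntegrable f' volume a b := by
  obtain ⟨u, -, hu, hua⟩ := exists_seq_strictAnti_tendsto' hab
  have hfu : Tendsto (fun n => f (u n)) atTop (𝓝 c) :=
    hc.comp (tendsto_nhdsWithin_iff.2 ⟨hua, .of_forall fun n => (hu n).1⟩)
  have hnorm : ∀ n, ∫ t in Ioc (u n) b, ‖f' t‖ = f b - f (u n) := fun n => by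
    have hun := (hu n).2.le
    rw [(h _ (hu n)).sub_eq_integral ⟨le_rfl, hun⟩ ⟨hun, le_rfl⟩,
      intervalIntegral.integral_of_le hun, integral_Ioc_eq_integral_Ioo,
      integral_Ioc_eq_integral_Ioo]
    refine integral_congr_ae ?_
    filter_upwards [ae_restrict_of_ae_restrict_of_subset (Ioo_subset_Ioo_left (hu n).1.le) hf']
      with t ht using Real.norm_of_nonneg ht
  rw [intervalIntegrable_iff_integrableOn_Ioc_of_le hab.le]
  refine integrableOn_Ioc_of_intervalIntegral_norm_bounded_left (I := f b - (c - 1))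
    (fun n => (h _ (hu n)).1.1) hua ?_
  filter_upwards [hfu.eventually_const_lt (sub_one_lt c)] with n hn
  linarith [hnorm n]

lemma update_left_of_tendsto_nhdsGT (hab : a < b) (h : ∀ x ∈ Ioo a b, IsPrimitiveOn f f' x b)
    (hf' : ∀ᵐ t ∂volume.restrict (Ioo a b), 0 ≤ f' t) (hc : Tendsto f (𝓝[>] a) (𝓝 c)) :
    IsPrimitiveOn (Function.update f a c) f' a b := by
  have hint := intervalIntegrable_of_tendsto_nhdsGT hab h hf' hc
  refine ⟨hint, fun x hx => ?_⟩
  rcases hx.1.eq_or_lt with rfl | hax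
  · simp
  rw [Function.update_of_ne hax.ne', Function.update_self]
  have hprim : Tendsto (fun y => ∫ t in y..x, f' t) (𝓝[>] a) (𝓝 (∫ t in a..x, f' t)) := by
    have hcont := intervalIntegral.continuousOn_primitive_interval' hint
      (Icc_subset_uIcc hx) a left_mem_uIcc
    have hle : 𝓝[>] a ≤ 𝓝[uIcc a b] a := by
      rw [uIcc_of_le hab.le, nhdsWithin_Icc_eq_nhdsGE hab]
      exact nhdsWithin_mono a Ioi_subset_Ici_self
    simpa only [intervalIntegral.integral_symm x] using (hcont.tendsto.mono_left hle).neg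
  refine tendsto_nhds_unique_of_eventuallyEq tendsto_const_nhds (hc.add hprim) ?_
  filter_upwards [Ioo_mem_nhdsGT hax] with y hy
  have hy' : y ∈ Ioo a b := ⟨hy.1, hy.2.trans_le hx.2⟩
  rw [← (h y hy').sub_eq_integral ⟨le_rfl, hy'.2.le⟩ ⟨hy.2.le, hx.2⟩, add_sub_cancel]

end IsPrimitiveOn

/-- The energy density `S² W(f', f/S, f/S)`, with respect to `dS`, of the radial map
`X ↦ f(|X|) X / |X|` in a material with stored energy function `W`. -/
noncomputable def radialDensity (W : ℝ → ℝ → ℝ → ℝ) (f f' : ℝ → ℝ) (S : ℝ) : ℝ :=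
  S ^ 2 * W (f' S) (f S / S) (f S / S)

section RadialDensity

variable {W : ℝ → ℝ → ℝ → ℝ} {f f' : ℝ → ℝ} {A : Set ℝ} {κ b : ℝ}

lemma integrableOn_radialDensity_const_mul (k : ℝ) (h : IntegrableOn (radialDensity W f f') A) :
    IntegrableOn (radialDensity (fun v₁ v₂ v₃ => k * W v₁ v₂ v₃) f f') A :=
  (h.const_mul k).congr (.of_forall fun S => mul_left_comm k (S ^ 2) _)

lemma radialDensity_comp_mul_left (hκ : κ ≠ 0) (R : ℝ) :
    radialDensity W (fun R => f (κ * R) / κ) (fun R => f' (κ * R)) R =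
      (κ ^ 2)⁻¹ * radialDensity W f f' (κ * R) := by
  simp only [radialDensity, div_div]
  field_simp

lemma integrableOn_radialDensity_comp_mul_left (hκ : 0 < κ) (hb : 0 ≤ b)
    (h : IntegrableOn (radialDensity W f f') (Ioo 0 (κ * b))) :
    IntegrableOn (radialDensity W (fun R => f (κ * R) / κ) (fun R => f' (κ * R))) (Ioo 0 b) := by
  rw [← intervalIntegrable_iff_integrableOn_Ioo_of_le (by positivity)] at h ⊢
  refine IntervalIntegrable.congr (fun R _ => (radialDensity_comp_mul_left hκ.ne' R).symm) ?_
  simpa [hκ.ne'] using (h.comp_mul_left (c := κ)).const_mul (κ ^ 2)⁻¹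

lemma setIntegral_radialDensity_comp_mul_left (hκ : 0 < κ) (hb : 0 ≤ b) :
    ∫ R in Ioo 0 b, radialDensity W (fun R => f (κ * R) / κ) (fun R => f' (κ * R)) R =
      (∫ S in Ioo 0 (κ * b), radialDensity W f f' S) / κ ^ 3 := by
  simp only [radialDensity_comp_mul_left hκ.ne', integral_const_mul,
    ← integral_Ioc_eq_integral_Ioo, ← intervalIntegral.integral_of_le hb,
    ← intervalIntegral.integral_of_le (mul_nonneg hκ.le hb)]
  rw [intervalIntegral.integral_comp_mul_left _ hκ.ne', mul_zero, smul_eq_mul]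
  field_simp

end RadialDensity

section SetIntegrals

variable {E : Type*} [NormedAddCommGroup E] [NormedSpace ℝ E]

lemma continuousAt_setIntegral_Ioo_zero {f : ℝ → E} {x : ℝ} (hx : 0 < x)
    (hf : ∀ b > 0, IntegrableOn f (Ioo 0 b)) :
    ContinuousAt (fun b => ∫ t in Ioo 0 b, f t) x := by
  have hx1 : 0 ≤ x + 1 := by positivity
  have hint : IntervalIntegrable f volume 0 (x + 1) :=
    (intervalIntegrable_iff_integrableOn_Ioo_of_le hx1).2 (hf _ (by positivity))
  have hcont := intervalIntegral.continuousOn_primitive_interval' hint left_mem_uIcc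
  rw [uIcc_of_le hx1] at hcont
  refine (hcont.continuousAt (Icc_mem_nhds hx (lt_add_one x))).congr ?_
  filter_upwards [lt_mem_nhds hx] with b hb
  rw [intervalIntegral.integral_of_le hb.le, integral_Ioc_eq_integral_Ioo]

lemma setIntegral_sq_mul_const {ε : ℝ} (hε : 0 ≤ ε) (A : ℝ) :
    ∫ R in Ioo 0 ε, R ^ 2 * A = A / 3 * ε ^ 3 := by
  rw [← integral_Ioc_eq_integral_Ioo, ← intervalIntegral.integral_of_le hε,
    intervalIntegral.integral_mul_const, integral_pow]
  norm_num
  ring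

lemma eventually_mul_pow_three_le_setIntegral {g : ℝ → ℝ} {L A : ℝ} (hL : 3 * L < A)
    (hg : Tendsto g (𝓝[>] 0) (𝓝 A))
    (hint : IntegrableOn (fun R => R ^ 2 * g R) (Ioo 0 1)) :
    ∀ᶠ ε in 𝓝[>] (0 : ℝ), L * ε ^ 3 ≤ ∫ R in Ioo 0 ε, R ^ 2 * g R := by
  obtain ⟨e, he, hge⟩ := mem_nhdsGT_iff_exists_Ioo_subset.1 (hg.eventually_const_lt hL)
  filter_upwards [Ioo_mem_nhdsGT he, Ioo_mem_nhdsGT one_pos] with ε hεe hε1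
  have hcont : Continuous fun R : ℝ => R ^ 2 * (3 * L) := by fun_prop
  rw [← mul_div_cancel_left₀ L (three_ne_zero' ℝ), ← setIntegral_sq_mul_const hεe.1.le]
  refine setIntegral_mono_on (hcont.integrableOn_Icc.mono_set Ioo_subset_Icc_self)
    (hint.mono_set (Ioo_subset_Ioo_right hε1.2.le)) measurableSet_Ioo fun R hR => ?_
  have hLR : 3 * L < g R := hge ⟨hR.1, hR.2.trans hεe.2⟩
  gcongr

lemma setIntegral_sub_setIntegral_of_eqOn_diff {α : Type*} [MeasurableSpace α] {ν : Measure α}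
    {f g : α → E} {s t : Set α} (hst : s ⊆ t) (ht : MeasurableSet t)
    (hf : IntegrableOn f t ν) (hg : IntegrableOn g t ν) (hfg : EqOn f g (t \ s)) :
    (∫ x in t, f x ∂ν) - ∫ x in t, g x ∂ν = (∫ x in s, f x ∂ν) - ∫ x in s, g x ∂ν := by
  rw [← integral_sub hf hg, ← integral_sub (hf.mono_set hst) (hg.mono_set hst)]
  exact setIntegral_eq_of_subset_of_forall_sdiff_eq_zero ht hst
    fun x hx => sub_eq_zero.2 (hfg hx)

end SetIntegrals

section Comparison

lemma image_mem_nhds_of_strictAntiOn {q : ℝ → ℝ} {s t : Set ℝ} {x : ℝ} (hq : ContinuousOn q s)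
    (hanti : StrictAntiOn q s) (hs : s ∈ 𝓝 x) (ht : t ∈ 𝓝 x) : q '' t ∈ 𝓝 (q x) := by
  obtain ⟨ε, hε, hsub⟩ := (nhds_basis_Icc_pos x).mem_iff.1 (inter_mem hs ht)
  have hle : x - ε ≤ x + ε := by linarith
  have hlx : q x < q (x - ε) :=
    hanti (hsub (left_mem_Icc.2 hle)).1 (mem_of_mem_nhds hs) (sub_lt_self x hε)
  have hxu : q (x + ε) < q x :=
    hanti (mem_of_mem_nhds hs) (hsub (right_mem_Icc.2 hle)).1 (lt_add_of_pos_right x hε)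
  filter_upwards [Icc_mem_nhds hxu hlx] with y hy
  obtain ⟨z, hz, hzy⟩ :=
    intermediate_value_Icc' hle (hq.mono (hsub.trans inter_subset_left)) hy
  exact ⟨z, (hsub hz).2, hzy⟩

lemma eventually_exists_eq_of_strictAntiOn {q σ : ℝ → ℝ} {s : Set ℝ} {x : ℝ} {l : Filter ℝ}
    {P : ℝ × ℝ → Prop} (hq : ContinuousOn q s) (hanti : StrictAntiOn q s) (hs : s ∈ 𝓝 x)
    (hσ : Tendsto σ l (𝓝 (q x))) {y : ℝ} (hl : l ≤ 𝓝 y) (hP : ∀ᶠ p in 𝓝 (x, y), P p) :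
    ∀ᶠ ε in l, ∃ z ∈ s, q z = σ ε ∧ P (z, ε) := by
  rw [nhds_prod_eq, eventually_prod_iff] at hP
  obtain ⟨P₁, hP₁, P₂, hP₂, hP⟩ := hP
  have himage : q '' (s ∩ {z | P₁ z}) ∈ 𝓝 (q x) :=
    image_mem_nhds_of_strictAntiOn hq hanti hs (inter_mem hs hP₁)
  filter_upwards [hσ.eventually_mem himage, hl hP₂] with ε ⟨z, ⟨hzs, hz⟩, hzε⟩ hε
  exact ⟨z, hzs, hzε, hP hz hε⟩

lemma exists_pos_mul_le_of_tendsto_div {f : ℝ → ℝ} {b ℓ : ℝ} (hb : 0 < b) (hℓ : 0 < ℓ)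
    (hf : MonotoneOn f (Icc 0 b)) (hlim : Tendsto (fun R => f R / R) (𝓝[>] 0) (𝓝 ℓ)) :
    ∃ m > 0, ∀ R ∈ Ioo 0 b, m * R ≤ f R := by
  obtain ⟨e, he, hfe⟩ := mem_nhdsGT_iff_exists_Ioc_subset.1
    ((hlim.eventually_const_lt (half_lt_self hℓ)).and (Ioo_mem_nhdsGT hb))
  have hlow : ∀ R ∈ Ioc 0 e, ℓ / 2 * R < f R := fun R hR => (lt_div_iff₀ hR.1).1 (hfe hR).1
  have heb : e ∈ Ioo 0 b := (hfe ⟨he, le_rfl⟩).2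
  have hfe0 : 0 < f e := (mul_pos (half_pos hℓ) he).trans (hlow e ⟨he, le_rfl⟩)
  refine ⟨min (ℓ / 2) (f e / b), by positivity, fun R hR => ?_⟩
  rcases le_total R e with hRe | heR
  · calc min (ℓ / 2) (f e / b) * R ≤ ℓ / 2 * R := by
          gcongr
          exacts [hR.1.le, min_le_left _ _]
      _ ≤ f R := (hlow R ⟨hR.1, hRe⟩).le
  · calc min (ℓ / 2) (f e / b) * R ≤ f e / b * b := by
          gcongr
          exacts [hR.1.le, min_le_right _ _, hR.2.le]
      _ = f e := div_mul_cancel₀ _ hb.ne'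
      _ ≤ f R := hf ⟨heb.1.le, heb.2.le⟩ ⟨hR.1.le, hR.2.le⟩ heR

end Comparison

/-- The stored energy function `Φ` of an inhomogeneous material differs from its value at the
centre by at most `R Ψ`: the integrated form of the bound `|∂Φ/∂R| ≤ Ψ`. -/
def CenterLipschitz (Φ : ℝ → ℝ → ℝ → ℝ → ℝ) (Ψ : ℝ → ℝ → ℝ → ℝ) : Prop :=
  ∀ R ∈ Icc (0 : ℝ) 1, ∀ v₁ ∈ Ioi (0 : ℝ), ∀ v₂ ∈ Ioi (0 : ℝ), ∀ v₃ ∈ Ioi (0 : ℝ),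
    |Φ R v₁ v₂ v₃ - Φ 0 v₁ v₂ v₃| ≤ R * Ψ v₁ v₂ v₃

lemma abs_sub_le_mul_of_abs_hasDerivWithinAt_le {f f' : ℝ → ℝ} {a b x M : ℝ}
    (hf : ∀ y ∈ Icc a b, HasDerivWithinAt f (f' y) (Icc a b) y)
    (hf' : ∀ y ∈ Icc a b, |f' y| ≤ M) (hx : x ∈ Icc a b) : |f x - f a| ≤ (x - a) * M := by
  have hmvt := (convex_Icc a b).norm_image_sub_le_of_norm_hasDerivWithin_le hf hf'
    (left_mem_Icc.2 (hx.1.trans hx.2)) hx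
  rwa [Real.norm_of_nonneg (sub_nonneg.2 hx.1), mul_comm] at hmvt

lemma CenterLipschitz.of_hasDerivWithinAt {Φ ΦR : ℝ → ℝ → ℝ → ℝ → ℝ} {Ψ : ℝ → ℝ → ℝ → ℝ}
    (hΦ : ∀ R ∈ Icc (0 : ℝ) 1, ∀ v₁ ∈ Ioi (0 : ℝ), ∀ v₂ ∈ Ioi (0 : ℝ), ∀ v₃ ∈ Ioi (0 : ℝ),
      HasDerivWithinAt (fun t => Φ t v₁ v₂ v₃) (ΦR R v₁ v₂ v₃) (Icc (0 : ℝ) 1) R)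
    (hΦR : ∀ R ∈ Icc (0 : ℝ) 1, ∀ v₁ ∈ Ioi (0 : ℝ), ∀ v₂ ∈ Ioi (0 : ℝ), ∀ v₃ ∈ Ioi (0 : ℝ),
      |ΦR R v₁ v₂ v₃| ≤ Ψ v₁ v₂ v₃) :
    CenterLipschitz Φ Ψ := fun R hR v₁ h₁ v₂ h₂ v₃ h₃ => by
  simpa only [sub_zero] using abs_sub_le_mul_of_abs_hasDerivWithinAt_le
    (fun t ht => hΦ t ht v₁ h₁ v₂ h₂ v₃ h₃) (fun t ht => hΦR t ht v₁ h₁ v₂ h₂ v₃ h₃) hR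

lemma CenterLipschitz.abs_radialDensity_sub_le {Φ : ℝ → ℝ → ℝ → ℝ → ℝ} {Ψ : ℝ → ℝ → ℝ → ℝ}
    (hΦ : CenterLipschitz Φ Ψ) {f f' : ℝ → ℝ} {R : ℝ} (hR : R ∈ Ioc (0 : ℝ) 1) (hf : 0 < f R)
    (hf' : 0 < f' R) :
    |radialDensity (Φ R) f f' R - radialDensity (Φ 0) f f' R| ≤ R * radialDensity Ψ f f' R := by
  have hstrain : 0 < f R / R := div_pos hf hR.1
  rw [radialDensity, radialDensity, radialDensity, ← mul_sub, abs_mul, abs_of_nonneg (sq_nonneg R),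
    mul_left_comm]
  gcongr
  exact hΦ R ⟨hR.1.le, hR.2⟩ _ hf' _ hstrain _ hstrain

/-- A radial comparison map `f` on `(0, ∞)` with a.e. derivative `f' > 0`, opening a cavity of
radius `c ≥ 0` at the origin and having strictly decreasing hoop strain `f S / S`. The value
`f 0` is irrelevant: `c` is the limit of `f` at `0⁺`. -/
structure IsRadialProfile (c : ℝ) (f f' : ℝ → ℝ) : Prop where
  isPrimitiveOn : ∀ a, 0 < a → ∀ b, a ≤ b → IsPrimitiveOn f f' a b
  deriv_pos : ∀ᵐ S ∂volume.restrict (Ioi (0 : ℝ)), 0 < f' S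
  cavity_nonneg : 0 ≤ c
  tendsto_cavity : Tendsto f (𝓝[>] 0) (𝓝 c)
  strictAntiOn_strain : StrictAntiOn (fun S => f S / S) (Ioi 0)

namespace IsRadialProfile

variable {c κ S ε : ℝ} {f f' : ℝ → ℝ}

lemma deriv_pos_Ioo (hf : IsRadialProfile c f f') (b : ℝ) :
    ∀ᵐ S ∂volume.restrict (Ioo 0 b), 0 < f' S :=
  ae_restrict_of_ae_restrict_of_subset Ioo_subset_Ioi_self hf.deriv_pos

lemma isPrimitiveOn_update_zero (hf : IsRadialProfile c f f') (hS : 0 < S) :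
    IsPrimitiveOn (Function.update f 0 c) f' 0 S :=
  .update_left_of_tendsto_nhdsGT hS (fun a ha => hf.isPrimitiveOn a ha.1 S ha.2.le)
    ((hf.deriv_pos_Ioo S).mono fun _ => le_of_lt) hf.tendsto_cavity

lemma nonneg (hf : IsRadialProfile c f f') (hS : 0 < S) : 0 ≤ f S := by
  have hmono := (hf.isPrimitiveOn_update_zero hS).monotoneOn
    ((hf.deriv_pos_Ioo S).mono fun _ => le_of_lt)
  have hcS := hmono ⟨le_rfl, hS.le⟩ ⟨hS.le, le_rfl⟩ hS.le
  rw [Function.update_self, Function.update_of_ne hS.ne'] at hcS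
  exact hf.cavity_nonneg.trans hcS

lemma pos (hf : IsRadialProfile c f f') (hS : 0 < S) : 0 < f S := by
  have hS1 : 0 < S + 1 := by positivity
  have hlt : f (S + 1) / (S + 1) < f S / S := hf.strictAntiOn_strain hS hS1 (lt_add_one S)
  exact (div_pos_iff_of_pos_right hS).1 ((div_nonneg (hf.nonneg hS1) hS1.le).trans_lt hlt)

lemma continuousOn (hf : IsRadialProfile c f f') : ContinuousOn f (Ioi 0) := fun S hS =>
  ((hf.isPrimitiveOn (S / 2) (half_pos hS) (S + 1)
    (by linarith [mem_Ioi.1 hS])).continuousOn.continuousAt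
      (Icc_mem_nhds (half_lt_self hS) (lt_add_one S))).continuousWithinAt

lemma continuousOn_strain (hf : IsRadialProfile c f f') :
    ContinuousOn (fun S => f S / S) (Ioi 0) :=
  hf.continuousOn.div continuousOn_id fun _ hS => (mem_Ioi.1 hS).ne'

lemma comp_mul_left (hκ : 0 < κ) (hf : IsRadialProfile c f f') :
    IsRadialProfile (c / κ) (fun R => f (κ * R) / κ) (fun R => f' (κ * R)) where
  isPrimitiveOn a ha b hab :=
    .comp_mul_left hκ (hf.isPrimitiveOn (κ * a) (by positivity) (κ * b) (by gcongr))
  deriv_pos := by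
    have hpres : Measure.QuasiMeasurePreserving (fun R : ℝ => κ * R) volume volume :=
      ⟨by fun_prop, by
        rw [Real.map_volume_mul_left hκ.ne']
        exact Measure.smul_absolutelyContinuous⟩
    have hpos := hf.deriv_pos
    rw [ae_restrict_iff' measurableSet_Ioi] at hpos ⊢
    filter_upwards [hpres.ae hpos] with R hR hR0 using hR (mul_pos hκ hR0)
  cavity_nonneg := div_nonneg hf.cavity_nonneg hκ.le
  tendsto_cavity := by
    refine (hf.tendsto_cavity.comp (tendsto_nhdsWithin_iff.2 ⟨?_, ?_⟩)).div_const κ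
    · exact (Continuous.tendsto' (by fun_prop) 0 0 (mul_zero κ)).mono_left nhdsWithin_le_nhds
    · filter_upwards [self_mem_nhdsWithin] with R hR using mul_pos hκ hR
  strictAntiOn_strain := by
    intro R hR T hT hRT
    simp only [div_div]
    exact hf.strictAntiOn_strain (mul_pos hκ hR) (mul_pos hκ hT) (by gcongr)

end IsRadialProfile

lemma aemeasurable_comp_of_continuousOn {α E F : Type*} [MeasurableSpace α] [TopologicalSpace E]
    [MeasurableSpace E] [OpensMeasurableSpace E] [TopologicalSpace F] [MeasurableSpace F]
    [BorelSpace F] {ν : Measure α} {G : E → F} {h : α → E} {s : Set E} (hG : ContinuousOn G s)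
    (hs : MeasurableSet s) (hh : AEMeasurable h ν) (hmem : ∀ᵐ x ∂ν, h x ∈ s) :
    AEMeasurable (fun x => G (h x)) ν := by
  have hG' : AEMeasurable G ((ν.map h).restrict s) := hG.aemeasurable hs
  rw [Measure.restrict_eq_self_of_ae_mem ((ae_map_iff hh hs).2 hmem)] at hG'
  exact hG'.comp_aemeasurable hh

namespace IsRadialProfile

variable {c ε : ℝ} {f f' : ℝ → ℝ} {Φ : ℝ → ℝ → ℝ → ℝ → ℝ} {Ψ : ℝ → ℝ → ℝ → ℝ}

lemma aemeasurable_radialDensity (hf : IsRadialProfile c f f') (hε : 0 < ε) (hε1 : ε ≤ 1)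
    (hΦ : ContinuousOn (fun p : ℝ × ℝ × ℝ × ℝ => Φ p.1 p.2.1 p.2.2.1 p.2.2.2)
      (Icc 0 1 ×ˢ Ioi 0 ×ˢ Ioi 0 ×ˢ Ioi 0)) :
    AEMeasurable (fun R => radialDensity (Φ R) f f' R) (volume.restrict (Ioo 0 ε)) := by
  have hmf' : AEMeasurable f' (volume.restrict (Ioo 0 ε)) :=
    ((intervalIntegrable_iff_integrableOn_Ioo_of_le hε.le).1
      (hf.isPrimitiveOn_update_zero hε).1).aemeasurable
  have hmq : AEMeasurable (fun R => f R / R) (volume.restrict (Ioo 0 ε)) :=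
    (hf.continuousOn_strain.mono Ioo_subset_Ioi_self).aemeasurable measurableSet_Ioo
  have hdom : MeasurableSet (Icc (0 : ℝ) 1 ×ˢ Ioi (0 : ℝ) ×ˢ Ioi (0 : ℝ) ×ˢ Ioi (0 : ℝ)) := by
    measurability
  refine AEMeasurable.mul (by fun_prop) (aemeasurable_comp_of_continuousOn hΦ hdom
    (aemeasurable_id.prodMk (hmf'.prodMk (hmq.prodMk hmq))) ?_)
  filter_upwards [hf.deriv_pos_Ioo ε, ae_restrict_mem measurableSet_Ioo] with R hR' hR
  have hq : 0 < f R / R := div_pos (hf.pos hR.1) hR.1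
  exact ⟨⟨hR.1.le, hR.2.le.trans hε1⟩, hR', hq, hq⟩

lemma ae_abs_radialDensity_sub_le (hf : IsRadialProfile c f f') (hε1 : ε ≤ 1)
    (hLip : CenterLipschitz Φ Ψ) :
    ∀ᵐ R ∂volume.restrict (Ioo 0 ε),
      |radialDensity (Φ R) f f' R - radialDensity (Φ 0) f f' R| ≤ ε * radialDensity Ψ f f' R := by
  filter_upwards [hf.deriv_pos_Ioo ε, ae_restrict_mem measurableSet_Ioo] with R hR' hR
  have hbound := hLip.abs_radialDensity_sub_le ⟨hR.1, hR.2.le.trans hε1⟩ (hf.pos hR.1) hR'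
  have hΨ : 0 ≤ radialDensity Ψ f f' R :=
    nonneg_of_mul_nonneg_right ((abs_nonneg _).trans hbound) hR.1
  exact hbound.trans (by gcongr; exact hR.2.le)

lemma integrableOn_radialDensity (hf : IsRadialProfile c f f') (hε : 0 < ε) (hε1 : ε ≤ 1)
    (hΦ : ContinuousOn (fun p : ℝ × ℝ × ℝ × ℝ => Φ p.1 p.2.1 p.2.2.1 p.2.2.2)
      (Icc 0 1 ×ˢ Ioi 0 ×ˢ Ioi 0 ×ˢ Ioi 0))
    (hLip : CenterLipschitz Φ Ψ) (hΨ : IntegrableOn (radialDensity Ψ f f') (Ioo 0 ε))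
    (hΦ₀ : IntegrableOn (radialDensity (Φ 0) f f') (Ioo 0 ε)) :
    IntegrableOn (fun R => radialDensity (Φ R) f f' R) (Ioo 0 ε) := by
  have hdiff : IntegrableOn
      (fun R => radialDensity (Φ R) f f' R - radialDensity (Φ 0) f f' R) (Ioo 0 ε) :=
    (hΨ.const_mul ε).mono'
      ((hf.aemeasurable_radialDensity hε hε1 hΦ).sub hΦ₀.aemeasurable).aestronglyMeasurable
      (hf.ae_abs_radialDensity_sub_le hε1 hLip)
  exact (hdiff.add hΦ₀).congr (.of_forall fun R => sub_add_cancel _ _)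

lemma setIntegral_radialDensity_le (hf : IsRadialProfile c f f') (hε : 0 < ε) (hε1 : ε ≤ 1)
    (hΦ : ContinuousOn (fun p : ℝ × ℝ × ℝ × ℝ => Φ p.1 p.2.1 p.2.2.1 p.2.2.2)
      (Icc 0 1 ×ˢ Ioi 0 ×ˢ Ioi 0 ×ˢ Ioi 0))
    (hLip : CenterLipschitz Φ Ψ) (hΨ : IntegrableOn (radialDensity Ψ f f') (Ioo 0 ε))
    (hΦ₀ : IntegrableOn (radialDensity (Φ 0) f f') (Ioo 0 ε)) :
    ∫ R in Ioo 0 ε, radialDensity (Φ R) f f' R ≤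
      (∫ R in Ioo 0 ε, radialDensity (Φ 0) f f' R) +
        ε * ∫ R in Ioo 0 ε, radialDensity Ψ f f' R := by
  rw [← integral_const_mul, ← integral_add hΦ₀ (hΨ.const_mul ε)]
  refine integral_mono_ae (hf.integrableOn_radialDensity hε hε1 hΦ hLip hΨ hΦ₀)
    (hΦ₀.add (hΨ.const_mul ε)) ?_
  filter_upwards [hf.ae_abs_radialDensity_sub_le hε1 hLip] with R hR
  linarith [le_of_abs_le hR]

end IsRadialProfile

/-- The integrand of the gravitational potential energy `Ipot`. -/
noncomputable def potentialDensity (ρ0 f : ℝ → ℝ) (R : ℝ) : ℝ :=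
  ρ0 R * Mfun ρ0 R * (f R)⁻¹ * R ^ 2

section Potential

variable {ρ0 f : ℝ → ℝ} {k m R ε : ℝ}

lemma abs_Mfun_le (hk : ∀ u ∈ Icc (0 : ℝ) 1, |ρ0 u| ≤ k) (hR : R ∈ Icc (0 : ℝ) 1) :
    |Mfun ρ0 R| ≤ 4 * π * k * R ^ 3 := by
  have hbound : ∀ u ∈ uIoc 0 R, ‖ρ0 u * u ^ 2‖ ≤ k * R ^ 2 := fun u hu => by
    rw [uIoc_of_le hR.1] at hu
    rw [norm_mul, Real.norm_eq_abs, norm_pow, Real.norm_of_nonneg hu.1.le]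
    have hku := hk u ⟨hu.1.le, hu.2.trans hR.2⟩
    have hk0 : 0 ≤ k := (abs_nonneg _).trans hku
    gcongr
    exacts [hu.1.le, hu.2]
  have hmass := intervalIntegral.norm_integral_le_of_norm_le_const hbound
  rw [Real.norm_eq_abs, sub_zero, abs_of_nonneg hR.1] at hmass
  calc |Mfun ρ0 R| = 4 * π * |∫ u in (0 : ℝ)..R, ρ0 u * u ^ 2| := by
        rw [Mfun, abs_mul, abs_of_pos (by positivity)]
    _ ≤ 4 * π * (k * R ^ 2 * R) := by gcongr
    _ = 4 * π * k * R ^ 3 := by ring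

lemma continuousOn_Mfun (hρ : Measurable ρ0) (hk : ∀ u ∈ Icc (0 : ℝ) 1, |ρ0 u| ≤ k) :
    ContinuousOn (Mfun ρ0) (Icc 0 1) := by
  have hbdd : IntegrableOn ρ0 (Icc 0 1) :=
    Measure.integrableOn_of_bounded measure_Icc_lt_top.ne hρ.aestronglyMeasurable
      ((ae_restrict_iff' measurableSet_Icc).2 (.of_forall hk))
  have hint : IntegrableOn (fun u => ρ0 u * u ^ 2) (uIcc 0 1) := by
    rw [uIcc_of_le zero_le_one]
    exact hbdd.mul_continuousOn (by fun_prop) isCompact_Icc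
  have hprim := intervalIntegral.continuousOn_primitive_interval hint
  rw [uIcc_of_le zero_le_one] at hprim
  exact hprim.const_mul (4 * π)

lemma abs_potentialDensity_le (hk : ∀ u ∈ Icc (0 : ℝ) 1, |ρ0 u| ≤ k) (hm : 0 < m)
    (hR : R ∈ Ioc (0 : ℝ) 1) (hf : m * R ≤ f R) :
    |potentialDensity ρ0 f R| ≤ 4 * π * k ^ 2 / m * R ^ 4 := by
  have hR0 := hR.1
  have hR1 : R ∈ Icc (0 : ℝ) 1 := ⟨hR.1.le, hR.2⟩
  have hk0 : 0 ≤ k := (abs_nonneg _).trans (hk R hR1)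
  have hf0 : 0 < f R := (mul_pos hm hR0).trans_le hf
  calc |potentialDensity ρ0 f R| = |ρ0 R| * |Mfun ρ0 R| * (f R)⁻¹ * R ^ 2 := by
        rw [potentialDensity, abs_mul, abs_mul, abs_mul, abs_of_pos (inv_pos.2 hf0),
          abs_of_nonneg (sq_nonneg R)]
    _ ≤ k * (4 * π * k * R ^ 3) * (m * R)⁻¹ * R ^ 2 := by
        gcongr
        exacts [hk R hR1, abs_Mfun_le hk hR1]
    _ = 4 * π * k ^ 2 / m * R ^ 4 := by field_simp

lemma integrableOn_potentialDensity (hρ : Measurable ρ0) (hk : ∀ u ∈ Icc (0 : ℝ) 1, |ρ0 u| ≤ k)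
    (hm : 0 < m) (hf : ContinuousOn f (Ioo 0 1)) (hmf : ∀ R ∈ Ioo (0 : ℝ) 1, m * R ≤ f R) :
    IntegrableOn (potentialDensity ρ0 f) (Ioo 0 1) := by
  have hMmeas : AEMeasurable (Mfun ρ0) (volume.restrict (Ioo 0 1)) :=
    ((continuousOn_Mfun hρ hk).mono Ioo_subset_Icc_self).aemeasurable measurableSet_Ioo
  have hmeas : AEMeasurable (potentialDensity ρ0 f) (volume.restrict (Ioo 0 1)) :=
    ((hρ.aemeasurable.mul hMmeas).mul (hf.aemeasurable measurableSet_Ioo).inv).mul (by fun_prop)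
  have hdom : IntegrableOn (fun R : ℝ => 4 * π * k ^ 2 / m * R ^ 4) (Ioo 0 1) :=
    (ContinuousOn.integrableOn_Icc (by fun_prop)).mono_set Ioo_subset_Icc_self
  refine Integrable.mono' hdom hmeas.aestronglyMeasurable
    ((ae_restrict_iff' measurableSet_Ioo).2 (.of_forall fun R hR => ?_))
  exact abs_potentialDensity_le hk hm ⟨hR.1, hR.2.le⟩ (hmf R hR)

lemma abs_setIntegral_potentialDensity_le (hk : ∀ u ∈ Icc (0 : ℝ) 1, |ρ0 u| ≤ k) (hm : 0 < m)
    (hε : 0 ≤ ε) (hε1 : ε ≤ 1) (hmf : ∀ R ∈ Ioo 0 ε, m * R ≤ f R) :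
    |∫ R in Ioo 0 ε, potentialDensity ρ0 f R| ≤ 4 * π * k ^ 2 / m * ε ^ 5 := by
  have hbound : ∀ R ∈ Ioo 0 ε, ‖potentialDensity ρ0 f R‖ ≤ 4 * π * k ^ 2 / m * ε ^ 4 :=
    fun R hR => by
      refine (abs_potentialDensity_le hk hm ⟨hR.1, hR.2.le.trans hε1⟩ (hmf R hR)).trans ?_
      gcongr
      exacts [hR.1.le, hR.2.le]
  calc |∫ R in Ioo 0 ε, potentialDensity ρ0 f R|
      ≤ 4 * π * k ^ 2 / m * ε ^ 4 * volume.real (Ioo 0 ε) :=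
        norm_setIntegral_le_of_norm_le_const measure_Ioo_lt_top hbound
    _ = 4 * π * k ^ 2 / m * ε ^ 5 := by
        rw [Real.volume_real_Ioo_of_le hε]
        ring

end Potential

lemma Imec_eq_setIntegral_radialDensity (Φ : ℝ → ℝ → ℝ → ℝ → ℝ) (r r' : ℝ → ℝ) :
    Imec Φ r r' = ∫ R in Ioo 0 1, radialDensity (Φ R) r r' R := by
  simp only [Imec, radialDensity, mul_comm]

lemma Ipot_eq_setIntegral_potentialDensity (ρ0 r : ℝ → ℝ) :
    Ipot ρ0 r = ∫ R in Ioo 0 1, potentialDensity ρ0 r R := rfl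

section Adm

variable {Φ : ℝ → ℝ → ℝ → ℝ → ℝ} {lam : ℝ} {r r' : ℝ → ℝ}

lemma adm_iff :
    Adm Φ lam r r' ↔ IsPrimitiveOn r r' 0 1 ∧ (∀ᵐ R ∂volume.restrict (Ioo 0 1), 0 < r' R) ∧
      r 1 = lam ∧ 0 ≤ r 0 ∧ IntegrableOn (fun R => radialDensity (Φ R) r r' R) (Ioo 0 1) := by
  simp only [Adm, IsPrimitiveOn, radialDensity, mul_comm, and_assoc]

lemma Adm.isPrimitiveOn (hr : Adm Φ lam r r') : IsPrimitiveOn r r' 0 1 :=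
  (adm_iff.1 hr).1

lemma Adm.integrableOn_radialDensity (hr : Adm Φ lam r r') :
    IntegrableOn (fun R => radialDensity (Φ R) r r' R) (Ioo 0 1) :=
  (adm_iff.1 hr).2.2.2.2

lemma Adm.monotoneOn (hr : Adm Φ lam r r') : MonotoneOn r (Icc 0 1) :=
  hr.isPrimitiveOn.monotoneOn ((adm_iff.1 hr).2.1.mono fun _ => le_of_lt)

end Adm

lemma Ifun_sub_Ifun_le {Φ : ℝ → ℝ → ℝ → ℝ → ℝ} {ρ0 g g' r r' : ℝ → ℝ} {k lam m ε : ℝ}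
    (hρ : Measurable ρ0) (hk : ∀ u ∈ Icc (0 : ℝ) 1, |ρ0 u| ≤ k)
    (hg : Adm Φ lam g g') (hr : Adm Φ lam r r') (hε : ε ∈ Ioo (0 : ℝ) 1)
    (heq : EqOn g r (Ico ε 1)) (heq' : EqOn g' r' (Ico ε 1)) (hm : 0 < m)
    (hmg : ∀ R ∈ Ioo (0 : ℝ) 1, m * R ≤ g R) (hmr : ∀ R ∈ Ioo (0 : ℝ) 1, m * R ≤ r R) :
    Ifun Φ ρ0 g g' - Ifun Φ ρ0 r r' ≤
      (∫ R in Ioo 0 ε, radialDensity (Φ R) g g' R) - (∫ R in Ioo 0 ε, radialDensity (Φ R) r r' R) +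
        2 * (4 * π * k ^ 2 / m) * ε ^ 5 := by
  have hsub : Ioo 0 ε ⊆ Ioo 0 1 := Ioo_subset_Ioo_right hε.2.le
  have hmem : Ioo 0 1 \ Ioo 0 ε ⊆ Ico ε 1 := fun R hR =>
    ⟨not_lt.1 fun hRε => hR.2 ⟨hR.1.1, hRε⟩, hR.1.2⟩
  have hmec : Imec Φ g g' - Imec Φ r r' =
      (∫ R in Ioo 0 ε, radialDensity (Φ R) g g' R) -
        ∫ R in Ioo 0 ε, radialDensity (Φ R) r r' R := by
    rw [Imec_eq_setIntegral_radialDensity, Imec_eq_setIntegral_radialDensity]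
    refine setIntegral_sub_setIntegral_of_eqOn_diff hsub measurableSet_Ioo
      hg.integrableOn_radialDensity hr.integrableOn_radialDensity fun R hR => ?_
    simp only [radialDensity, heq (hmem hR), heq' (hmem hR)]
  have hpot : Ipot ρ0 g - Ipot ρ0 r =
      (∫ R in Ioo 0 ε, potentialDensity ρ0 g R) - ∫ R in Ioo 0 ε, potentialDensity ρ0 r R := by
    rw [Ipot_eq_setIntegral_potentialDensity, Ipot_eq_setIntegral_potentialDensity]
    refine setIntegral_sub_setIntegral_of_eqOn_diff hsub measurableSet_Ioo
      (integrableOn_potentialDensity hρ hk hm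
        (hg.isPrimitiveOn.continuousOn.mono Ioo_subset_Icc_self) hmg)
      (integrableOn_potentialDensity hρ hk hm
        (hr.isPrimitiveOn.continuousOn.mono Ioo_subset_Icc_self) hmr) fun R hR => ?_
    simp only [potentialDensity, heq (hmem hR)]
  have hpg := abs_le.1 (abs_setIntegral_potentialDensity_le hk hm hε.1.le hε.2.le
    fun R hR => hmg R (hsub hR))
  have hpr := abs_le.1 (abs_setIntegral_potentialDensity_le hk hm hε.1.le hε.2.le
    fun R hR => hmr R (hsub hR))
  rw [Ifun, Ifun]
  linarith [hpg.1, hpr.2]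

/-- The competitor obtained from the map `r` by putting the radial profile `f` on `[0, ε)`, where
`f 0` is replaced by the cavity radius `c` of `f`. -/
noncomputable def graft (c ε : ℝ) (f r : ℝ → ℝ) : ℝ → ℝ :=
  (Iio ε).piecewise (Function.update f 0 c) r

section Graft

variable {c ε lam m R : ℝ} {f f' r r' : ℝ → ℝ} {Φ : ℝ → ℝ → ℝ → ℝ → ℝ}

lemma graft_of_mem_Ioo (hR : R ∈ Ioo 0 ε) : graft c ε f r R = f R :=
  (piecewise_eq_of_mem (Iio ε) _ _ hR.2).trans (Function.update_of_ne hR.1.ne' c f)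

lemma graft_of_le (hR : ε ≤ R) : graft c ε f r R = r R :=
  piecewise_eq_of_notMem (Iio ε) _ _ (notMem_Iio.2 hR)

lemma graft_zero (hε : 0 < ε) : graft c ε f r 0 = c :=
  (piecewise_eq_of_mem (Iio ε) _ _ hε).trans (Function.update_self 0 c f)

lemma radialDensity_graft_of_mem_Ioo (W : ℝ → ℝ → ℝ → ℝ) (hR : R ∈ Ioo 0 ε) :
    radialDensity W (graft c ε f r) ((Iio ε).piecewise f' r') R = radialDensity W f f' R := by
  rw [radialDensity, graft_of_mem_Ioo hR, piecewise_eq_of_mem (Iio ε) _ _ hR.2, radialDensity]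

lemma radialDensity_graft_of_le (W : ℝ → ℝ → ℝ → ℝ) (hR : ε ≤ R) :
    radialDensity W (graft c ε f r) ((Iio ε).piecewise f' r') R = radialDensity W r r' R := by
  rw [radialDensity, graft_of_le hR, piecewise_eq_of_notMem (Iio ε) _ _ (notMem_Iio.2 hR),
    radialDensity]

lemma IsRadialProfile.mul_le_graft (hf : IsRadialProfile c f f') (hfr : f ε = r ε)
    (hmr : ∀ R ∈ Ioo (0 : ℝ) 1, m * R ≤ r R) (hε : ε ∈ Ioo (0 : ℝ) 1) (hR : R ∈ Ioo (0 : ℝ) 1) :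
    m * R ≤ graft c ε f r R := by
  rcases lt_or_ge R ε with hRε | hεR
  · rw [graft_of_mem_Ioo ⟨hR.1, hRε⟩, ← le_div_iff₀ hR.1]
    calc m ≤ r ε / ε := (le_div_iff₀ hε.1).2 (hmr ε hε)
      _ = f ε / ε := by rw [hfr]
      _ ≤ f R / R := (hf.strictAntiOn_strain hR.1 hε.1 hRε).le
  · rw [graft_of_le hεR]
    exact hmr R hR

lemma IsRadialProfile.adm_graft (hf : IsRadialProfile c f f') (hr : Adm Φ lam r r')
    (hε : ε ∈ Ioo (0 : ℝ) 1) (hfr : f ε = r ε)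
    (hE : IntegrableOn (fun R => radialDensity (Φ R) f f' R) (Ioo 0 ε)) :
    Adm Φ lam (graft c ε f r) ((Iio ε).piecewise f' r') := by
  obtain ⟨hprim, hpos, hlam, -, hEr⟩ := adm_iff.1 hr
  refine adm_iff.2 ⟨?_, ?_, (graft_of_le hε.2.le).trans hlam,
    (graft_zero hε.1).symm ▸ hf.cavity_nonneg, ?_⟩
  · refine (hf.isPrimitiveOn_update_zero hε.1).piecewise_Iio
      (hprim.mono ⟨hε.1.le, hε.2.le⟩ ⟨zero_le_one, le_rfl⟩) hε.1.le hε.2.le ?_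
    rw [Function.update_of_ne hε.1.ne', hfr]
  · filter_upwards [hf.deriv_pos_Ioo 1, hpos] with R hf' hr'
    rw [piecewise]
    split_ifs
    exacts [hf', hr']
  · rw [← Ioo_union_Ico_eq_Ioo hε.1 hε.2.le]
    refine IntegrableOn.union (hE.congr_fun (fun R hR => ?_) measurableSet_Ioo)
      ((hEr.mono_set (Ico_subset_Ioo_left hε.1)).congr_fun (fun R hR => ?_) measurableSet_Ico)
    · exact (radialDensity_graft_of_mem_Ioo (Φ R) hR).symm
    · exact (radialDensity_graft_of_le (Φ R) hR.1).symm

lemma IsRadialProfile.Ifun_graft_lt {ρ0 : ℝ → ℝ} {k : ℝ} (hf : IsRadialProfile c f f')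
    (hρ : Measurable ρ0) (hk : ∀ u ∈ Icc (0 : ℝ) 1, |ρ0 u| ≤ k) (hr : Adm Φ lam r r')
    (hε : ε ∈ Ioo (0 : ℝ) 1) (hfr : f ε = r ε)
    (hE : IntegrableOn (fun R => radialDensity (Φ R) f f' R) (Ioo 0 ε))
    (hm : 0 < m) (hmr : ∀ R ∈ Ioo (0 : ℝ) 1, m * R ≤ r R)
    (hlt : (∫ R in Ioo 0 ε, radialDensity (Φ R) f f' R) + 2 * (4 * π * k ^ 2 / m) * ε ^ 5 <
      ∫ R in Ioo 0 ε, radialDensity (Φ R) r r' R) :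
    Ifun Φ ρ0 (graft c ε f r) ((Iio ε).piecewise f' r') < Ifun Φ ρ0 r r' := by
  have hdiff := Ifun_sub_Ifun_le hρ hk (hf.adm_graft hr hε hfr hE) hr hε
    (fun R hR => graft_of_le hR.1)
    (fun R hR => piecewise_eq_of_notMem (Iio ε) _ _ (notMem_Iio.2 hR.1)) hm
    (fun R hR => hf.mul_le_graft hfr hmr hε hR) hmr
  rw [setIntegral_congr_fun measurableSet_Ioo
    fun R hR => radialDensity_graft_of_mem_Ioo (Φ R) hR] at hdiff
  linarith

end Graft

lemma tendsto_storedEnergy_center {Φ : ℝ → ℝ → ℝ → ℝ → ℝ}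
    (hΦ : ContinuousOn (fun p : ℝ × ℝ × ℝ × ℝ => Φ p.1 p.2.1 p.2.2.1 p.2.2.2)
      (Icc 0 1 ×ˢ Ioi 0 ×ˢ Ioi 0 ×ˢ Ioi 0)) {u v : ℝ → ℝ} {ℓ : ℝ} (hℓ : 0 < ℓ)
    (hu : Tendsto u (𝓝[>] 0) (𝓝 ℓ)) (hv : Tendsto v (𝓝[>] 0) (𝓝 ℓ)) :
    Tendsto (fun R => Φ R (u R) (v R) (v R)) (𝓝[>] 0) (𝓝 (Φ 0 ℓ ℓ ℓ)) := by
  have hmem : ((0 : ℝ), ℓ, ℓ, ℓ) ∈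
      Icc (0 : ℝ) 1 ×ˢ Ioi (0 : ℝ) ×ˢ Ioi (0 : ℝ) ×ˢ Ioi (0 : ℝ) :=
    ⟨⟨le_rfl, zero_le_one⟩, hℓ, hℓ, hℓ⟩
  have hid : Tendsto (fun R : ℝ => R) (𝓝[>] 0) (𝓝 0) := nhdsWithin_le_nhds
  refine (hΦ _ hmem).tendsto.comp (tendsto_nhdsWithin_iff.2
    ⟨hid.prodMk_nhds (hu.prodMk_nhds (hv.prodMk_nhds hv)), ?_⟩)
  filter_upwards [hu.eventually_const_lt hℓ, hv.eventually_const_lt hℓ, Ioo_mem_nhdsGT one_pos]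
    with R hu hv hR using ⟨⟨hR.1.le, hR.2.le⟩, hu, hv, hv⟩

lemma eventually_perturbed_scaled_energy_lt {G H : ℝ → ℝ} {μ L : ℝ} (K : ℝ)
    (hG : ContinuousAt G μ) (hH : ContinuousAt H μ) (hμ : μ ≠ 0) (hL : G μ / μ ^ 3 < L) :
    ∀ᶠ p : ℝ × ℝ in 𝓝 (μ, 0), (G p.1 + p.2 * H p.1) / p.1 ^ 3 + K * p.2 ^ 2 < L := by
  have hcont : ContinuousAt
      (fun p : ℝ × ℝ => (G p.1 + p.2 * H p.1) / p.1 ^ 3 + K * p.2 ^ 2) (μ, 0) := by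
    have hG' : ContinuousAt (fun p : ℝ × ℝ => G p.1) (μ, 0) := hG.comp continuousAt_fst
    have hH' : ContinuousAt (fun p : ℝ × ℝ => H p.1) (μ, 0) := hH.comp continuousAt_fst
    exact ((hG'.add (continuousAt_snd.mul hH')).div (by fun_prop) (pow_ne_zero 3 hμ)).add
      (by fun_prop)
  exact hcont.eventually_lt_const (by simpa using hL)

lemma IsRadialProfile.setIntegral_radialDensity_comp_mul_left_le {c κ ε : ℝ} {f f' : ℝ → ℝ}
    {Φ : ℝ → ℝ → ℝ → ℝ → ℝ} {Ψ : ℝ → ℝ → ℝ → ℝ} (hf : IsRadialProfile c f f') (hκ : 0 < κ)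
    (hε : 0 < ε) (hε1 : ε ≤ 1)
    (hΦ : ContinuousOn (fun p : ℝ × ℝ × ℝ × ℝ => Φ p.1 p.2.1 p.2.2.1 p.2.2.2)
      (Icc 0 1 ×ˢ Ioi 0 ×ˢ Ioi 0 ×ˢ Ioi 0))
    (hLip : CenterLipschitz Φ Ψ) (hΨ : IntegrableOn (radialDensity Ψ f f') (Ioo 0 (κ * ε)))
    (hΦ₀ : IntegrableOn (radialDensity (Φ 0) f f') (Ioo 0 (κ * ε))) :
    ∫ R in Ioo 0 ε, radialDensity (Φ R) (fun R => f (κ * R) / κ) (fun R => f' (κ * R)) R ≤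
      ((∫ S in Ioo 0 (κ * ε), radialDensity (Φ 0) f f' S) +
        ε * ∫ S in Ioo 0 (κ * ε), radialDensity Ψ f f' S) / κ ^ 3 := by
  rw [add_div, mul_div_assoc, ← setIntegral_radialDensity_comp_mul_left hκ hε.le,
    ← setIntegral_radialDensity_comp_mul_left hκ hε.le]
  exact (hf.comp_mul_left hκ).setIntegral_radialDensity_le hε hε1 hΦ hLip
    (integrableOn_radialDensity_comp_mul_left hκ hε.le hΨ)
    (integrableOn_radialDensity_comp_mul_left hκ hε.le hΦ₀)

lemma IsRadialProfile.exists_adm_Ifun_lt {Φ : ℝ → ℝ → ℝ → ℝ → ℝ} {Ψ : ℝ → ℝ → ℝ → ℝ}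
    {ρ0 f f' r r' : ℝ → ℝ} {c k lam m s ε L : ℝ} (hf : IsRadialProfile c f f')
    (hΦ : ContinuousOn (fun p : ℝ × ℝ × ℝ × ℝ => Φ p.1 p.2.1 p.2.2.1 p.2.2.2)
      (Icc 0 1 ×ˢ Ioi 0 ×ˢ Ioi 0 ×ˢ Ioi 0))
    (hLip : CenterLipschitz Φ Ψ) (hΨ : IntegrableOn (radialDensity Ψ f f') (Ioo 0 s))
    (hΦ₀ : IntegrableOn (radialDensity (Φ 0) f f') (Ioo 0 s))
    (hρ : Measurable ρ0) (hk : ∀ u ∈ Icc (0 : ℝ) 1, |ρ0 u| ≤ k) (hr : Adm Φ lam r r')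
    (hm : 0 < m) (hmr : ∀ R ∈ Ioo (0 : ℝ) 1, m * R ≤ r R)
    (hs : 0 < s) (hε : ε ∈ Ioo (0 : ℝ) 1) (hstrain : f s / s = r ε / ε)
    (hfL : ((∫ S in Ioo 0 s, radialDensity (Φ 0) f f' S) +
        ε * ∫ S in Ioo 0 s, radialDensity Ψ f f' S) / s ^ 3 +
      2 * (4 * π * k ^ 2 / m) * ε ^ 2 < L)
    (hrL : L * ε ^ 3 ≤ ∫ R in Ioo 0 ε, radialDensity (Φ R) r r' R) :
    ∃ g g' : ℝ → ℝ, Adm Φ lam g g' ∧ Ifun Φ ρ0 g g' < Ifun Φ ρ0 r r' := by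
  obtain ⟨hε0, hε1⟩ := hε
  obtain ⟨κ, rfl⟩ : ∃ κ, κ * ε = s := ⟨s / ε, div_mul_cancel₀ s hε0.ne'⟩
  have hκ : 0 < κ := pos_of_mul_pos_left hs hε0.le
  have hmatch : f (κ * ε) / κ = r ε := by
    field_simp at hstrain ⊢
    linarith
  have hdil := hf.comp_mul_left hκ
  have hE := hdil.integrableOn_radialDensity hε0 hε1.le hΦ hLip
    (integrableOn_radialDensity_comp_mul_left hκ hε0.le hΨ)
    (integrableOn_radialDensity_comp_mul_left hκ hε0.le hΦ₀)
  have hbound := hf.setIntegral_radialDensity_comp_mul_left_le hκ hε0 hε1.le hΦ hLip hΨ hΦ₀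
  refine ⟨_, _, hdil.adm_graft hr ⟨hε0, hε1⟩ hmatch hE,
    hdil.Ifun_graft_lt hρ hk hr ⟨hε0, hε1⟩ hmatch hE hm hmr ?_⟩
  refine lt_of_lt_of_le ?_ hrL
  have hscaled := mul_lt_mul_of_pos_right hfL (pow_pos hε0 3)
  rw [mul_pow, add_mul, div_mul_eq_mul_div, mul_div_mul_right _ _ (pow_ne_zero 3 hε0.ne')]
    at hscaled
  linarith

lemma setIntegral_radialDensity_div_pow_three_lt {W : ℝ → ℝ → ℝ → ℝ} {f f' : ℝ → ℝ} {ℓ μ : ℝ}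
    (hμ : 0 < μ)
    (h : (∫ U in Ioo (0 : ℝ) 1,
        U ^ 2 * W (f' (μ * U)) (f (μ * U) / (μ * U)) (f (μ * U) / (μ * U))) <
      ∫ U in Ioo (0 : ℝ) 1, U ^ 2 * W ℓ ℓ ℓ) :
    (∫ S in Ioo 0 μ, radialDensity W f f' S) / μ ^ 3 < W ℓ ℓ ℓ / 3 := by
  have hscale := setIntegral_radialDensity_comp_mul_left (W := W) (f := f) (f' := f') hμ
    zero_le_one
  rw [mul_one] at hscale
  rw [setIntegral_sq_mul_const zero_le_one, one_pow, mul_one] at h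
  rw [← hscale]
  simpa only [radialDensity, div_div] using h

theorem stmt14_general {Φ : ℝ → ℝ → ℝ → ℝ → ℝ} {Ψ : ℝ → ℝ → ℝ → ℝ}
    {ρ0 r r' rc rc' : ℝ → ℝ} {k lam ℓ μ c : ℝ}
    (hρ : Measurable ρ0) (hk : ∀ R ∈ Icc (0 : ℝ) 1, |ρ0 R| ≤ k)
    (hΦ : ContinuousOn (fun p : ℝ × ℝ × ℝ × ℝ => Φ p.1 p.2.1 p.2.2.1 p.2.2.2)
      (Icc 0 1 ×ˢ Ioi 0 ×ˢ Ioi 0 ×ˢ Ioi 0))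
    (hLip : CenterLipschitz Φ Ψ) (hr : Adm Φ lam r r') (hr'lim : Tendsto r' (𝓝[>] 0) (𝓝 ℓ))
    (hstrain : Tendsto (fun R => r R / R) (𝓝[>] 0) (𝓝 ℓ))
    (hμ : 0 < μ) (hrc : IsRadialProfile c rc rc') (hμℓ : rc μ / μ = ℓ)
    (hΨ : ∀ b > 0, IntegrableOn (radialDensity Ψ rc rc') (Ioo 0 b))
    (hΦ₀ : ∀ b > 0, IntegrableOn (radialDensity (Φ 0) rc rc') (Ioo 0 b))
    (hstrict : (∫ U in Ioo (0 : ℝ) 1,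
        U ^ 2 * Φ 0 (rc' (μ * U)) (rc (μ * U) / (μ * U)) (rc (μ * U) / (μ * U))) <
      ∫ U in Ioo (0 : ℝ) 1, U ^ 2 * Φ 0 ℓ ℓ ℓ) :
    ∃ g g' : ℝ → ℝ, Adm Φ lam g g' ∧ Ifun Φ ρ0 g g' < Ifun Φ ρ0 r r' := by
  have hℓ : 0 < ℓ := hμℓ ▸ div_pos (hrc.pos hμ) hμ
  obtain ⟨m, hm, hmr⟩ := exists_pos_mul_le_of_tendsto_div one_pos hℓ hr.monotoneOn hstrain
  obtain ⟨L, hGL, hLℓ⟩ := exists_between (setIntegral_radialDensity_div_pow_three_lt hμ hstrict)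
  have hrL := eventually_mul_pow_three_le_setIntegral ((lt_div_iff₀' three_pos).1 hLℓ)
    (tendsto_storedEnergy_center hΦ hℓ hr'lim hstrain) hr.integrableOn_radialDensity
  have hfL := eventually_exists_eq_of_strictAntiOn hrc.continuousOn_strain
    hrc.strictAntiOn_strain (Ioi_mem_nhds hμ) (hμℓ.symm ▸ hstrain) nhdsWithin_le_nhds
    (eventually_perturbed_scaled_energy_lt (2 * (4 * π * k ^ 2 / m))
      (continuousAt_setIntegral_Ioo_zero hμ hΦ₀) (continuousAt_setIntegral_Ioo_zero hμ hΨ)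
      hμ.ne' hGL)
  obtain ⟨ε, ⟨s, hs, hsε, hsL⟩, hεL, hε⟩ :=
    (hfL.and (hrL.and (Ioo_mem_nhdsGT one_pos))).exists
  exact hrc.exists_adm_Ifun_lt hΦ hLip (hΨ s hs) (hΦ₀ s hs) hρ hk hr hm hmr hs hε hsε hsL hεL

theorem stmt14 (ρ0 : ℝ → ℝ) (k0 k1 : ℝ) (hk0 : 0 < k0) (hρmeas : Measurable ρ0)
    (hρ : ∀ R ∈ Icc (0:ℝ) 1, k0 ≤ ρ0 R ∧ ρ0 R ≤ k1)
    (Φ ΦR : ℝ → ℝ → ℝ → ℝ → ℝ) (Φt : ℝ → ℝ → ℝ → ℝ)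
    (hΦnn : ∀ R ∈ Icc (0:ℝ) 1, ∀ v1 ∈ Ioi (0:ℝ), ∀ v2 ∈ Ioi (0:ℝ), ∀ v3 ∈ Ioi (0:ℝ),
      0 ≤ Φ R v1 v2 v3)
    (hΦsym : ∀ R ∈ Icc (0:ℝ) 1, ∀ v1 ∈ Ioi (0:ℝ), ∀ v2 ∈ Ioi (0:ℝ), ∀ v3 ∈ Ioi (0:ℝ),
      Φ R v1 v2 v3 = Φ R v2 v1 v3 ∧ Φ R v1 v2 v3 = Φ R v1 v3 v2)
    (hΦcont : ContinuousOn (fun p : ℝ × ℝ × ℝ × ℝ => Φ p.1 p.2.1 p.2.2.1 p.2.2.2)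
      (Icc 0 1 ×ˢ Ioi 0 ×ˢ Ioi 0 ×ˢ Ioi 0))
    -- `Φ` is continuously differentiable in `R`, with derivative `ΦR`
    (hΦRd : ∀ R ∈ Icc (0:ℝ) 1, ∀ v1 ∈ Ioi (0:ℝ), ∀ v2 ∈ Ioi (0:ℝ), ∀ v3 ∈ Ioi (0:ℝ),
      HasDerivWithinAt (fun t => Φ t v1 v2 v3) (ΦR R v1 v2 v3) (Icc (0:ℝ) 1) R)
    (hΦRcont : ContinuousOn (fun p : ℝ × ℝ × ℝ × ℝ => ΦR p.1 p.2.1 p.2.2.1 p.2.2.2)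
      (Icc 0 1 ×ˢ Ioi 0 ×ˢ Ioi 0 ×ˢ Ioi 0))
    (hΦtcont : ContinuousOn (fun p : ℝ × ℝ × ℝ => Φt p.1 p.2.1 p.2.2)
      (Ioi 0 ×ˢ Ioi 0 ×ˢ Ioi 0))
    (hΦtnn : ∀ v1 ∈ Ioi (0:ℝ), ∀ v2 ∈ Ioi (0:ℝ), ∀ v3 ∈ Ioi (0:ℝ), 0 ≤ Φt v1 v2 v3)
    -- the bound `|∂Φ/∂R| ≤ C Φ̃`
    (C : ℝ) (hC : 0 < C)
    (hΦRbdd : ∀ R ∈ Icc (0:ℝ) 1, ∀ v1 ∈ Ioi (0:ℝ), ∀ v2 ∈ Ioi (0:ℝ), ∀ v3 ∈ Ioi (0:ℝ),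
      |ΦR R v1 v2 v3| ≤ C * Φt v1 v2 v3)
    -- `r ∈ A_λ`, `r(0) = 0`, `r ∈ C¹((0,1])`, with strains extending continuously and
    -- strictly positively to `[0,1]` with common limit `ℓ` at the origin
    (lam : ℝ) (hlam : 0 < lam)
    (r r' : ℝ → ℝ) (hadm : Adm Φ lam r r') (hr0 : r 0 = 0)
    (hrC1 : ∀ R ∈ Ioc (0:ℝ) 1, HasDerivAt r (r' R) R)
    (hr'cont : ContinuousOn r' (Ioc (0:ℝ) 1))
    (hr'pos : ∀ R ∈ Ioc (0:ℝ) 1, 0 < r' R)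
    (ℓ : ℝ) (hℓ : 0 < ℓ)
    (hr'lim : Tendsto r' (nhdsWithin 0 (Ioi 0)) (nhds ℓ))
    (hstrainlim : Tendsto (fun R => r R / R) (nhdsWithin 0 (Ioi 0)) (nhds ℓ))
    -- the cavitating comparison map `r_c`, locally absolutely continuous on `(0,∞)`
    (μ : ℝ) (hμ : 0 < μ) (rc rc' : ℝ → ℝ)
    (hrcAC : ∀ a : ℝ, 0 < a → ∀ b : ℝ, a ≤ b →
      IntervalIntegrable rc' volume a b ∧
      ∀ x ∈ Icc a b, rc x = rc a + ∫ t in a..x, rc' t)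
    (hrc'pos : ∀ᵐ S ∂volume.restrict (Ioi (0:ℝ)), 0 < rc' S)
    (hcav : ∃ c > (0:ℝ), Tendsto rc (nhdsWithin 0 (Ioi 0)) (nhds c))
    (hratiocont : ContinuousOn (fun S => rc S / S) (Ioi (0:ℝ)))
    (hratiodec : StrictAntiOn (fun S => rc S / S) (Ioi (0:ℝ)))
    (hratioinf : Tendsto (fun S => rc S / S) (nhdsWithin 0 (Ioi 0)) atTop)
    (hμℓ : rc μ / μ = ℓ) (hμ' : ∃ μ' > μ, rc μ' / μ' < ℓ)
    -- finite energies of `r_c`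
    (hrcE : ∀ b > (0:ℝ),
      IntegrableOn (fun S => S ^ 2 * Φt (rc' S) (rc S / S) (rc S / S)) (Ioo 0 b) ∧
      IntegrableOn (fun S => S ^ 2 * Φ 0 (rc' S) (rc S / S) (rc S / S)) (Ioo 0 b))
    -- the strict energy inequality (supercriticality of `ℓ`)
    (hstrict : (∫ U in Ioo (0:ℝ) 1,
        U ^ 2 * Φ 0 (rc' (μ * U)) (rc (μ * U) / (μ * U)) (rc (μ * U) / (μ * U))) <
      ∫ U in Ioo (0:ℝ) 1, U ^ 2 * Φ 0 ℓ ℓ ℓ) :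
    ∃ rhat rhat' : ℝ → ℝ, Adm Φ lam rhat rhat' ∧
      Ifun Φ ρ0 rhat rhat' < Ifun Φ ρ0 r r' := by
  obtain ⟨c, hc, hclim⟩ := hcav
  exact stmt14_general (k := k1) (Ψ := fun v₁ v₂ v₃ => C * Φt v₁ v₂ v₃) hρmeas
    (fun R hR => abs_le.2 ⟨by linarith [hρ R hR], (hρ R hR).2⟩) hΦcont
    (.of_hasDerivWithinAt hΦRd hΦRbdd) hadm hr'lim hstrainlim hμ
    ⟨hrcAC, hrc'pos, hc.le, hclim, hratiodec⟩ hμℓ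
    (fun b hb => integrableOn_radialDensity_const_mul C (hrcE b hb).1)
    (fun b hb => (hrcE b hb).2) hstrict
end
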